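/- Let α ∈ (0,1) lie in the exceptional set ℰ (i.e. Gⁿ(α) ≥ α for all integers n ≥ 1), and for x ∈ [α−1,α) let Φ_α(x) = {y : (x,y) ∈ Λ_α} be the vertical fiber of Λ_α over x. Then for every integer d ≥ d_α(α)+1 and every pair x ∈ Δ_α(+1,d) and x′ ∈ Δ_α(−1,d+1) with T_α(x) = T_α(x′), the closure of {1−y : y ∈ Φ_α(x)} ∪ Φ_α(x′) equals the interval [0,1]. -/

import Mathlib

/-!
The covering of `[0,1]` comes from comparing the `α`-expansion with the regular continued
fraction expansion on the level of planar maps.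

Let `S` be the union whose closure is `Λ_α`. It contains `[α-1, α) × {0}` and is stable under the
planar map `𝒯_α` away from `x = 0` (`preLambda_step`): a letter of `𝒜_α` is appended to the word,
while any other letter sends the fibre `[0,1]` into `[0, 1/(d_α(α)+1)]`, so the word restarts as
the empty one.

For `u ∈ (0,1)` and rational `v ∈ [0,1)`, one of `(u, v)`, `(u-1, v/(1+v))` (with `u ≥ α`),
`(-u/(1+u), 1-v)` lies in `S`. This is clear for `v = 0`, and it is preserved by
the planar Gauss map `(u, v) ↦ (1/u - b, 1/(b+v))` (`Linked.gauss_step`), so it holds for all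
rational `v` by the Euclidean algorithm (`linked_rat`). At `u = x < α` the second alternative
is void, and `-x/(1+x)` is exactly the point `x'`. Hence `v ∈ Φ_α(x)` or `1 - v ∈ Φ_α(x')` for a
dense set of `v`. The reverse inclusion holds since `S ⊆ ℝ × [0,1]`.
-/


open MeasureTheory Set

noncomputable section

/-- The Möbius action of a 2×2 real matrix `M = [[a,b],[c,d]]` on `ℝ`. -/
def moeb (M : Matrix (Fin 2) (Fin 2) ℝ) (x : ℝ) : ℝ :=
  (M 0 0 * x + M 0 1) / (M 1 0 * x + M 1 1)

/-- The Borel measure `dμ = dx dy / (1+xy)²` on the plane. -/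
def muP : Measure (ℝ × ℝ) :=
  volume.withDensity fun p => ENNReal.ofReal (((1 + p.1 * p.2) ^ 2)⁻¹)

/-- Nakada's `α`-continued fraction map on `[α-1, α)`:
`T_α(0) = 0` and `T_α(x) = |1/x| - ⌊|1/x| + 1 - α⌋` for `x ≠ 0`. -/
def nakadaT (α : ℝ) (x : ℝ) : ℝ :=
  if x = 0 then 0 else |1 / x| - ⌊|1 / x| + 1 - α⌋

/-- The sign `ε(x)`: `+1` if `x > 0`, `-1` if `x < 0`. -/
def epsN (x : ℝ) : ℤ := if 0 < x then 1 else -1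

/-- The digit `d_α(x) = ⌊|1/x| + 1 - α⌋`. -/
def dN (α x : ℝ) : ℤ := ⌊|1 / x| + 1 - α⌋

/-- The cylinder `Δ_α(ε,d)` of points of `[α-1, α) ∖ {0}` with digit `(ε,d)`. -/
def cylN (α : ℝ) (ε d : ℤ) : Set ℝ :=
  {x | x ∈ Set.Ico (α - 1) α ∧ x ≠ 0 ∧ epsN x = ε ∧ dN α x = d}

/-- For a digit `a = (ε,d)`, the matrix `N_a = [[0,1],[ε,d]]`, acting as
`y ↦ 1/(εy + d)`. -/
def Nmat (a : ℤ × ℤ) : Matrix (Fin 2) (Fin 2) ℝ :=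
  !![0, 1; (a.1 : ℝ), (a.2 : ℝ)]

/-- The cylinder `Δ_α(w)` of a finite word `w = a₁⋯a_k` of digits: the set of points
of `[α-1, α)` whose initial digit string is `w` (with orbit avoiding `0`). -/
def cylW (α : ℝ) (w : List (ℤ × ℤ)) : Set ℝ :=
  {x | x ∈ Set.Ico (α - 1) α ∧ ∀ i < w.length,
    (nakadaT α)^[i] x ≠ 0 ∧
      (epsN ((nakadaT α)^[i] x), dN α ((nakadaT α)^[i] x)) = w.getD i (0, 0)}

/-- `N_w = N_{a_k} ⋯ N_{a_1}` for `w = a₁⋯a_k`. -/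
def NmatW (w : List (ℤ × ℤ)) : Matrix (Fin 2) (Fin 2) ℝ :=
  ((w.map Nmat).reverse).prod

/-- The alphabet `𝒜_α = {(-1,d') : 2 ≤ d' ≤ d_α(α)+1} ∪ {(+1, d_α(α))}`. -/
def calA (α : ℝ) : Set (ℤ × ℤ) :=
  {a | (a.1 = -1 ∧ 2 ≤ a.2 ∧ a.2 ≤ dN α α + 1) ∨ a = (1, dN α α)}

/-- `𝓛'_α`: the `α`-admissible words (including the empty word) all of whose letters
lie in `𝒜_α`. -/
def calL (α : ℝ) : Set (List (ℤ × ℤ)) :=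
  {w | (cylW α w).Nonempty ∧ ∀ a ∈ w, a ∈ calA α}

/-- The region `Λ_α`: the closure of
`⋃_{w ∈ 𝓛'_α} T_α^{|w|}(Δ_α(w)) × N_w·[0, 1/(d_α(α)+1)]`. -/
def LambdaN (α : ℝ) : Set (ℝ × ℝ) :=
  closure (⋃ w ∈ calL α,
    ((nakadaT α)^[w.length] '' cylW α w) ×ˢ
      (moeb (NmatW w) '' Set.Icc 0 (((dN α α : ℝ) + 1)⁻¹)))

/-- The two-dimensional map `𝒯_α(x,y) = (T_α(x), N_{(ε(x),d_α(x))}·y)`. -/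
def nakPlanar (α : ℝ) (p : ℝ × ℝ) : ℝ × ℝ :=
  (nakadaT α p.1, moeb (Nmat (epsN p.1, dN α p.1)) p.2)

/-- The Gauss map `G(x) = 1/x - ⌊1/x⌋`, `G(0) = 0`. -/
def gaussMap (x : ℝ) : ℝ := if x = 0 then 0 else 1 / x - ⌊1 / x⌋

/-- The vertical fiber `Φ_α(x) = {y : (x,y) ∈ Λ_α}`. -/
def PhiN (α : ℝ) (x : ℝ) : Set ℝ := {y | (x, y) ∈ LambdaN α}

/-! ### The union defining `Λ_α` and its fibres -/

/-- The union over `w ∈ 𝓛'_α` whose closure is `Λ_α`. -/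
def preLambda (α : ℝ) : Set (ℝ × ℝ) :=
  ⋃ w ∈ calL α, ((nakadaT α)^[w.length] '' cylW α w) ×ˢ
    (moeb (NmatW w) '' Set.Icc 0 (((dN α α : ℝ) + 1)⁻¹))

lemma NmatW_append (w : List (ℤ × ℤ)) (a : ℤ × ℤ) :
    NmatW (w ++ [a]) = Nmat a * NmatW w := by
  simp [NmatW]

lemma one_le_dN_self {α : ℝ} (hα : α ∈ Set.Ioo (0 : ℝ) 1) : 1 ≤ dN α α := by
  obtain ⟨h0, h1⟩ := hα
  unfold dN
  rw [Int.le_floor, abs_of_pos (by positivity)]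
  have : 1 ≤ 1 / α := by rw [le_div_iff₀ h0]; linarith
  push_cast
  linarith

lemma moeb_Nmat (ε d : ℤ) (y : ℝ) : moeb (Nmat (ε, d)) y = 1 / (ε * y + d) := by
  simp [moeb, Nmat]

/-- Numerator and denominator of `N_w · r` satisfy `0 ≤ p ≤ q`, `0 < q`; in particular
`N_w · r` is not a junk value and lies in `[0,1]`. -/
lemma NmatW_bounds {α : ℝ} (hα : α ∈ Set.Ioo (0 : ℝ) 1) (r : ℝ) (hr0 : 0 ≤ r) (hr1 : r ≤ 1)
    (w : List (ℤ × ℤ)) (hw : ∀ a ∈ w, a ∈ calA α) :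
    0 ≤ NmatW w 0 0 * r + NmatW w 0 1 ∧
      NmatW w 0 0 * r + NmatW w 0 1 ≤ NmatW w 1 0 * r + NmatW w 1 1 ∧
      0 < NmatW w 1 0 * r + NmatW w 1 1 := by
  induction w using List.reverseRecOn with
  | nil => simp [NmatW, hr0, hr1]
  | append_singleton w a ih =>
    obtain ⟨h0, h1, h2⟩ := ih fun b hb => hw b (by simp [hb])
    have ha := hw a (by simp)
    rw [NmatW_append]
    simp only [Nmat, Matrix.mul_apply, Fin.sum_univ_two, Matrix.of_apply, Matrix.cons_val_zero,
      Matrix.cons_val_one, Matrix.cons_val', Matrix.cons_val_fin_one]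
    set p := NmatW w 0 0 * r + NmatW w 0 1 with hp
    set q := NmatW w 1 0 * r + NmatW w 1 1 with hq
    have e1 : (0 * NmatW w 0 0 + 1 * NmatW w 1 0) * r + (0 * NmatW w 0 1 + 1 * NmatW w 1 1) = q := by
      rw [hq]; ring
    have e2 : ((a.1 : ℝ) * NmatW w 0 0 + a.2 * NmatW w 1 0) * r +
        ((a.1 : ℝ) * NmatW w 0 1 + a.2 * NmatW w 1 1) = a.1 * p + a.2 * q := by
      rw [hq, hp]; ring
    rw [e1, e2]
    have key : q ≤ a.1 * p + a.2 * q := by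
      rcases ha with ⟨hε, hd, -⟩ | rfl
      · have : (2 : ℝ) ≤ a.2 := by exact_mod_cast hd
        rw [hε]; push_cast; nlinarith
      · have : (1 : ℝ) ≤ (dN α α : ℝ) := by exact_mod_cast one_le_dN_self hα
        push_cast; nlinarith
    exact ⟨h2.le, key, by linarith⟩

lemma inv_succ_le_one {α : ℝ} (hα : α ∈ Set.Ioo (0 : ℝ) 1) : ((dN α α : ℝ) + 1)⁻¹ ≤ 1 := by
  have : (1 : ℝ) ≤ (dN α α : ℝ) := by exact_mod_cast one_le_dN_self hα
  exact inv_le_one_of_one_le₀ (by linarith)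

lemma preLambda_snd_mem {α : ℝ} (hα : α ∈ Set.Ioo (0 : ℝ) 1) {p : ℝ × ℝ}
    (hp : p ∈ preLambda α) : p.2 ∈ Set.Icc (0 : ℝ) 1 := by
  simp only [preLambda, mem_iUnion] at hp
  obtain ⟨w, hw, -, r, hr, hp2⟩ := hp
  obtain ⟨h0, h1, h2⟩ := NmatW_bounds hα r hr.1 (hr.2.trans (inv_succ_le_one hα)) w hw.2
  rw [← hp2]
  exact ⟨div_nonneg h0 h2.le, (div_le_one h2).2 h1⟩

lemma preLambda_empty_word {α t s : ℝ} (ht : t ∈ Set.Ico (α - 1) α)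
    (hs : s ∈ Set.Icc 0 (((dN α α : ℝ) + 1)⁻¹)) : (t, s) ∈ preLambda α := by
  simp only [preLambda, mem_iUnion]
  exact ⟨[], ⟨⟨t, ht, by simp⟩, by simp⟩, ⟨t, ⟨ht, by simp⟩, rfl⟩, s, hs, by simp [moeb, NmatW]⟩

lemma preLambda_zero {α : ℝ} (hα : α ∈ Set.Ioo (0 : ℝ) 1) {t : ℝ}
    (ht : t ∈ Set.Ico (α - 1) α) : (t, 0) ∈ preLambda α := by
  refine preLambda_empty_word ht ⟨le_rfl, ?_⟩
  have : (1 : ℝ) ≤ (dN α α : ℝ) := by exact_mod_cast one_le_dN_self hα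
  positivity

lemma nakadaT_mem {α t : ℝ} (ht : t ≠ 0) : nakadaT α t ∈ Set.Ico (α - 1) α := by
  have h1 := Int.floor_le (|1 / t| + 1 - α)
  have h2 := Int.lt_floor_add_one (|1 / t| + 1 - α)
  rw [nakadaT, if_neg ht]
  constructor <;> linarith

lemma preLambda_fst_mem {α : ℝ} {p : ℝ × ℝ} (hp : p ∈ preLambda α) :
    p.1 ∈ Set.Ico (α - 1) α := by
  simp only [preLambda, mem_iUnion] at hp
  obtain ⟨w, -, ⟨z, hz, hp1⟩, -⟩ := hp
  rw [← hp1]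
  rcases Nat.eq_zero_or_pos w.length with h | h
  · rw [h]; exact hz.1
  · obtain ⟨n, hn⟩ : ∃ n, w.length = n + 1 := ⟨w.length - 1, by omega⟩
    rw [hn, Function.iterate_succ_apply']
    exact nakadaT_mem (hz.2 n (by omega)).1

/-! ### Stability under the planar `α`-map -/

/-- A digit outside `𝒜_α` contracts the full fibre `[0,1]` into `[0, 1/(d_α(α)+1)]`. -/
lemma moeb_large_digit {α t s : ℝ} (hα : α ∈ Set.Ioo (0 : ℝ) 1)
    (ht : t ∈ Set.Ico (α - 1) α) (ht0 : t ≠ 0) (hs : s ∈ Set.Icc (0 : ℝ) 1)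
    (ha : (epsN t, dN α t) ∉ calA α) :
    moeb (Nmat (epsN t, dN α t)) s ∈ Set.Icc 0 (((dN α α : ℝ) + 1)⁻¹) := by
  obtain ⟨h0, h1⟩ := hα
  have hD : (1 : ℝ) ≤ (dN α α : ℝ) := by exact_mod_cast one_le_dN_self ⟨h0, h1⟩
  obtain ⟨hs0, hs1⟩ := hs
  suffices h : (dN α α : ℝ) + 1 ≤ epsN t * s + dN α t by
    rw [moeb_Nmat, one_div]
    exact ⟨inv_nonneg.2 (by linarith), inv_anti₀ (by linarith) h⟩
  simp only [calA, mem_ofPred_eq, Prod.mk.injEq, not_or, not_and, not_le] at ha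
  rcases lt_or_gt_of_ne ht0 with hneg | hpos
  · have he : epsN t = -1 := by simp [epsN, hneg.le]
    have h2 : 2 ≤ dN α t := by
      rw [dN, Int.le_floor, abs_of_neg (one_div_neg.2 hneg)]
      -- `1/(1-α) + (1-α) ≥ 2`
      have : 1 / (1 - α) ≤ -(1 / t) := by
        rw [← one_div_neg_eq_neg_one_div]
        exact one_div_le_one_div_of_le (by linarith) (by linarith [ht.1])
      have h3 : 1 + α ≤ 1 / (1 - α) := by
        rw [le_div_iff₀ (by linarith)]; nlinarith
      push_cast; linarith
    have h3 : (dN α α : ℝ) + 2 ≤ dN α t := by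
      exact_mod_cast (show dN α α + 2 ≤ dN α t by have := ha.1 he h2; omega)
    rw [he]; push_cast; linarith
  · have he : epsN t = 1 := by simp [epsN, hpos]
    have h2 : dN α α ≤ dN α t := by
      apply Int.floor_le_floor
      rw [abs_of_pos (by positivity), abs_of_pos (by positivity)]
      have := one_div_le_one_div_of_le hpos ht.2.le
      linarith
    have h3 : (dN α α : ℝ) + 1 ≤ dN α t := by
      exact_mod_cast (show dN α α + 1 ≤ dN α t by have := ha.2 he; omega)
    rw [he]; push_cast; linarith

/-- Stability of the union under the planar map `𝒯_α`. -/
lemma preLambda_step {α t s : ℝ} (hα : α ∈ Set.Ioo (0 : ℝ) 1) (h : (t, s) ∈ preLambda α)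
    (ht0 : t ≠ 0) :
    (nakadaT α t, moeb (Nmat (epsN t, dN α t)) s) ∈ preLambda α := by
  by_cases ha : (epsN t, dN α t) ∈ calA α
  · simp only [preLambda, mem_iUnion] at h ⊢
    obtain ⟨w, hw, ⟨z, hz, hzt⟩, r, hr, hrs⟩ := h
    dsimp only at hzt hrs
    obtain ⟨-, -, hden⟩ := NmatW_bounds hα r hr.1 (hr.2.trans (inv_succ_le_one hα)) w hw.2
    have hz' : z ∈ cylW α (w ++ [(epsN t, dN α t)]) := by
      refine ⟨hz.1, fun i hi => ?_⟩
      rcases Nat.lt_or_ge i w.length with hlt | hge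
      · rw [List.getD_append _ _ _ _ hlt]
        exact hz.2 i hlt
      · obtain rfl : i = w.length := by simp at hi; omega
        rw [hzt]
        simp [ht0]
    refine ⟨w ++ [(epsN t, dN α t)], ⟨⟨z, hz'⟩, ?_⟩, ⟨z, hz', ?_⟩, r, hr, ?_⟩
    · intro a h
      rcases List.mem_append.1 h with h | h
      · exact hw.2 a h
      · rw [List.mem_singleton.1 h]; exact ha
    · simp only [List.length_append, List.length_singleton]
      rw [Function.iterate_succ_apply', hzt]
    · rw [NmatW_append, moeb_Nmat, ← hrs]
      simp only [moeb, Nmat, Matrix.mul_apply, Fin.sum_univ_two, Matrix.of_apply,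
        Matrix.cons_val_zero, Matrix.cons_val_one, Matrix.cons_val', Matrix.cons_val_fin_one]
      set p := NmatW w 0 0 * r + NmatW w 0 1 with hp
      set q := NmatW w 1 0 * r + NmatW w 1 1 with hq
      have e1 : (0 * NmatW w 0 0 + 1 * NmatW w 1 0) * r +
          (0 * NmatW w 0 1 + 1 * NmatW w 1 1) = q := by
        rw [hq]; ring
      have e2 : ((epsN t : ℝ) * NmatW w 0 0 + dN α t * NmatW w 1 0) * r +
          ((epsN t : ℝ) * NmatW w 0 1 + dN α t * NmatW w 1 1) = (epsN t * (p / q) + dN α t) * q := by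
        have : p / q * q = p := div_mul_cancel₀ _ hden.ne'
        linear_combination -(epsN t : ℝ) * this - (epsN t : ℝ) * hp - (dN α t : ℝ) * hq
      rw [e1, e2, div_mul_cancel_right₀ hden.ne', one_div]
  · exact preLambda_empty_word (nakadaT_mem ht0)
      (moeb_large_digit hα (preLambda_fst_mem h) ht0 (preLambda_snd_mem hα h) ha)

/-- `preLambda_step` at a positive point, with the digit identified by the location of the
image. -/
lemma preLambda_step_pos {α t s : ℝ} (hα : α ∈ Set.Ioo (0 : ℝ) 1) (h : (t, s) ∈ preLambda α)
    (ht : 0 < t) (d : ℤ) (hd : 1 / t - d ∈ Set.Ico (α - 1) α) :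
    (1 / t - d, 1 / (d + s)) ∈ preLambda α := by
  have hdig : dN α t = d := by
    rw [dN, Int.floor_eq_iff, abs_of_pos (by positivity)]
    exact ⟨by linarith [hd.1], by linarith [hd.2]⟩
  have h1 := preLambda_step hα h ht.ne'
  have hT : nakadaT α t = |1 / t| - dN α t := by rw [nakadaT, if_neg ht.ne', dN]
  rw [moeb_Nmat, hT, hdig, abs_of_pos (by positivity)] at h1
  simp only [epsN, ht, if_true, Int.cast_one, one_mul] at h1
  rwa [add_comm s] at h1

/-- `preLambda_step` at a negative point, with the digit identified by the location of the
image. -/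
lemma preLambda_step_neg {α t s : ℝ} (hα : α ∈ Set.Ioo (0 : ℝ) 1) (h : (t, s) ∈ preLambda α)
    (ht : t < 0) (d : ℤ) (hd : -(1 / t) - d ∈ Set.Ico (α - 1) α) :
    (-(1 / t) - d, 1 / (d - s)) ∈ preLambda α := by
  have hdig : dN α t = d := by
    rw [dN, Int.floor_eq_iff, abs_of_neg (one_div_neg.2 ht)]
    exact ⟨by linarith [hd.1], by linarith [hd.2]⟩
  have h1 := preLambda_step hα h ht.ne
  have hT : nakadaT α t = |1 / t| - dN α t := by rw [nakadaT, if_neg ht.ne, dN]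
  have he : epsN t = -1 := by simp [epsN, ht.le]
  rw [moeb_Nmat, hT, hdig, he, abs_of_neg (one_div_neg.2 ht)] at h1
  have e : (((-1 : ℤ) : ℝ) * s + d) = d - s := by push_cast; ring
  rwa [e] at h1

/-! ### Comparison with the planar Gauss map -/

/-- The state `(u, v)` of the planar Gauss map is seen by the `α`-expansion: as it is, after
the translation `u ↦ u - 1`, or in the form `(-u/(1+u), 1 - v)`, which is the translate of the
preceding state when the partial quotient between them is singularized. -/
def Linked (α u v : ℝ) : Prop :=
  (u, v) ∈ preLambda α ∨ (α ≤ u ∧ (u - 1, v / (1 + v)) ∈ preLambda α) ∨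
    (-u / (1 + u), 1 - v) ∈ preLambda α

/-- A translated state with partial quotient `b + 1` passes through `b` digits `(-1, 2)`, each
of which lowers the partial quotient by one. -/
lemma preLambda_twos {α u : ℝ} (hα : α ∈ Set.Ioo (0 : ℝ) 1) (hu : 0 < u) (b : ℕ) :
    ∀ v : ℝ, 0 ≤ v → α ≤ 1 / (b + 1 + u) →
      (1 / (b + 1 + u) - 1, v / (1 + v)) ∈ preLambda α →
      (-u / (1 + u), 1 - 1 / (b + 1 + v)) ∈ preLambda α := by
  induction b with
  | zero =>
    intro v hv _ h
    convert h using 2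
    · push_cast; field_simp; ring
    · push_cast; field_simp; ring
  | succ b ih =>
    intro v hv hle h
    push_cast at hle h
    have hb : (0 : ℝ) ≤ b := b.cast_nonneg
    have hlt : 1 / ((b : ℝ) + 1 + u) < 1 := by
      rw [div_lt_one (by positivity)]; linarith
    have hle' : α ≤ 1 / ((b : ℝ) + 1 + u) :=
      hle.trans (one_div_le_one_div_of_le (by positivity) (by linarith))
    have hneg : 1 / ((b : ℝ) + 1 + 1 + u) - 1 < 0 := by
      rw [sub_neg, div_lt_one (by positivity)]; linarith
    have e : -(1 / (1 / ((b : ℝ) + 1 + 1 + u) - 1)) - (2 : ℤ) = 1 / ((b : ℝ) + 1 + u) - 1 := by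
      have : 1 / ((b : ℝ) + 1 + 1 + u) - 1 = -((b + 1 + u) / (b + 1 + 1 + u)) := by
        field_simp; ring
      rw [this]; push_cast; field_simp; ring
    have h1 := preLambda_step_neg hα h hneg 2 (by
      rw [e]; exact ⟨by linarith, by linarith [hα.1]⟩)
    rw [e] at h1
    have h2 := ih (v + 1) (by linarith) hle' (by
      convert h1 using 2
      have : (2 : ℝ) - v / (1 + v) = (1 + (v + 1)) / (v + 1) := by field_simp; ring
      push_cast
      rw [this, one_div_div])
    convert h2 using 4
    push_cast; ring

lemma Linked.gauss_step {α u v : ℝ} (hα : α ∈ Set.Ioo (0 : ℝ) 1) (hu : u ∈ Set.Ioo (0 : ℝ) 1)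
    (hv : 0 ≤ v) (b : ℕ) (h : Linked α (1 / (b + 1 + u)) v) :
    Linked α u (1 / (b + 1 + v)) := by
  obtain ⟨hu0, hu1⟩ := hu
  have hb : (0 : ℝ) ≤ b := b.cast_nonneg
  have e1 : 1 / ((b : ℝ) + 1 + v) / (1 + 1 / (b + 1 + v)) = 1 / (b + 2 + v) := by
    field_simp; ring
  rcases h with h | ⟨hle, h⟩ | h
  · have hpos : 0 < 1 / ((b : ℝ) + 1 + u) := by positivity
    rcases lt_or_ge u α with hlt | hge
    · have e : 1 / (1 / ((b : ℝ) + 1 + u)) - ((b + 1 : ℤ) : ℝ) = u := by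
        rw [one_div_one_div]; push_cast; ring
      have := preLambda_step_pos hα h hpos (b + 1)
        (by rw [e]; exact ⟨by linarith [hα.2], hlt⟩)
      rw [e] at this
      left
      simpa using this
    · have e : 1 / (1 / ((b : ℝ) + 1 + u)) - ((b + 2 : ℤ) : ℝ) = u - 1 := by
        rw [one_div_one_div]; push_cast; ring
      have := preLambda_step_pos hα h hpos (b + 2)
        (by rw [e]; exact ⟨by linarith, by linarith [hα.1]⟩)
      rw [e] at this
      right; left
      rw [e1]
      exact ⟨hge, by simpa using this⟩
  · right; right
    exact preLambda_twos hα hu0 b v hv hle h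
  · have e0 : -(1 / ((b : ℝ) + 1 + u)) / (1 + 1 / (b + 1 + u)) = -(1 / (b + 2 + u)) := by
      field_simp; ring
    rw [e0] at h
    have hneg : -(1 / ((b : ℝ) + 2 + u)) < 0 := by
      have : 0 < 1 / ((b : ℝ) + 2 + u) := by positivity
      linarith
    have e2 : -(1 / -(1 / ((b : ℝ) + 2 + u))) = b + 2 + u := by
      rw [one_div_neg_eq_neg_one_div, one_div_one_div, neg_neg]
    rcases lt_or_ge u α with hlt | hge
    · have e : -(1 / -(1 / ((b : ℝ) + 2 + u))) - ((b + 2 : ℤ) : ℝ) = u := by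
        rw [e2]; push_cast; ring
      have := preLambda_step_neg hα h hneg (b + 2)
        (by rw [e]; exact ⟨by linarith [hα.2], hlt⟩)
      rw [e] at this
      left
      convert this using 3
      push_cast; ring
    · have e : -(1 / -(1 / ((b : ℝ) + 2 + u))) - ((b + 3 : ℤ) : ℝ) = u - 1 := by
        rw [e2]; push_cast; ring
      have := preLambda_step_neg hα h hneg (b + 3)
        (by rw [e]; exact ⟨by linarith, by linarith [hα.1]⟩)
      rw [e] at this
      right; left
      rw [e1]
      refine ⟨hge, ?_⟩
      convert this using 3
      push_cast; ring

/-- Every state with rational past is linked, by the Euclidean algorithm on that past. -/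
lemma linked_rat {α : ℝ} (hα : α ∈ Set.Ioo (0 : ℝ) 1) (p : ℕ) :
    ∀ q : ℕ, p < q → ∀ u ∈ Set.Ioo (0 : ℝ) 1, Linked α u ((p : ℝ) / q) := by
  induction p using Nat.strong_induction_on with
  | _ p ih =>
    intro q hpq u hu
    rcases Nat.eq_zero_or_pos p with rfl | hp
    · rcases lt_or_ge u α with hlt | hge
      · left
        simpa using preLambda_zero hα (t := u) ⟨by linarith [hu.1, hα.2], hlt⟩
      · right; left
        refine ⟨hge, ?_⟩
        simpa using preLambda_zero hα (t := u - 1) ⟨by linarith, by linarith [hu.2, hα.1]⟩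
    · obtain ⟨b, hb⟩ : ∃ b, q / p = b + 1 :=
        ⟨q / p - 1, by have := Nat.div_pos hpq.le hp; omega⟩
      have hq : (q : ℝ) = (b + 1) * p + (q % p : ℕ) := by
        have := Nat.div_add_mod q p
        rw [hb] at this
        rw [← Nat.cast_inj (R := ℝ)] at this
        push_cast at this ⊢
        linarith
      have hp' : (0 : ℝ) < p := by exact_mod_cast hp
      have hu' : 1 / ((b : ℝ) + 1 + u) ∈ Set.Ioo (0 : ℝ) 1 := by
        have hb0 : (0 : ℝ) ≤ b := b.cast_nonneg
        have := hu.1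
        refine ⟨by positivity, ?_⟩
        rw [div_lt_one (by positivity)]; linarith
      have h := (ih (q % p) (Nat.mod_lt _ hp) p (Nat.mod_lt _ hp) _ hu').gauss_step hα hu
        (by positivity) b
      convert h using 1
      have : (b : ℝ) + 1 + (q % p : ℕ) / p = q / p := by
        rw [hq]; field_simp
      rw [this, one_div_div]

/-! ### The fibres over `x` and `x'` -/

/-- **Statement 16.** For `α ∈ (0,1)` in the exceptional set, for every integer
`d ≥ d_α(α)+1` and every pair `x ∈ Δ_α(+1,d)`, `x' ∈ Δ_α(-1,d+1)` with
`T_α(x) = T_α(x')`, the closure of `{1-y : y ∈ Φ_α(x)} ∪ Φ_α(x')` equals `[0,1]`. -/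
theorem stmt16 (α : ℝ) (hα : α ∈ Set.Ioo (0 : ℝ) 1)
    (hexc : ∀ n : ℕ, 1 ≤ n → α ≤ gaussMap^[n] α) :
    ∀ d : ℤ, dN α α + 1 ≤ d →
      ∀ x ∈ cylN α 1 d, ∀ x' ∈ cylN α (-1) (d + 1),
        nakadaT α x = nakadaT α x' →
        closure ((fun y : ℝ => 1 - y) '' PhiN α x ∪ PhiN α x') =
          Set.Icc (0 : ℝ) 1 := by
  intro d _ x hx x' hx' hT
  obtain ⟨⟨-, hxα⟩, hx0, hxe, hxd⟩ := hx
  obtain ⟨-, hx0', hxe', hxd'⟩ := hx'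
  have hxpos : 0 < x := by
    by_contra hn
    simp [epsN, hn] at hxe
  have hxneg' : x' < 0 := by
    refine lt_of_le_of_ne ?_ hx0'
    by_contra hn
    simp [epsN, not_le.1 hn] at hxe'
  -- equal images and digits `d`, `d + 1` give `-1/x' = 1/x + 1`
  have hxx' : x' = -x / (1 + x) := by
    have h1 : |1 / x| - (d : ℝ) = |1 / x'| - ((d + 1 : ℤ) : ℝ) := by
      rw [← hxd, show dN α x + 1 = dN α x' by rw [hxd, hxd']]
      simpa only [nakadaT, if_neg hx0, if_neg hx0', dN] using hT
    rw [abs_of_pos (by positivity), abs_of_neg (one_div_neg.2 hxneg')] at h1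
    push_cast at h1
    rw [eq_div_iff (by positivity)]
    field_simp at h1
    linarith
  have hsub : preLambda α ⊆ LambdaN α := subset_closure
  have hbound : ∀ t, PhiN α t ⊆ Set.Icc 0 1 := by
    intro t y hy
    have : LambdaN α ⊆ Prod.snd ⁻¹' Set.Icc (0 : ℝ) 1 :=
      closure_minimal (fun p hp => preLambda_snd_mem hα hp) (isClosed_Icc.preimage continuous_snd)
    exact this hy
  apply Subset.antisymm
  · refine closure_minimal (union_subset ?_ (hbound x')) isClosed_Icc
    rintro _ ⟨y, hy, rfl⟩
    obtain ⟨h0, h1⟩ := hbound x hy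
    exact ⟨by dsimp only; linarith, by dsimp only; linarith⟩
  · set B := closure ((fun y : ℝ => 1 - y) '' PhiN α x ∪ PhiN α x') with hB
    have hclosed : IsClosed ((fun y : ℝ => 1 - y) ⁻¹' B) :=
      isClosed_closure.preimage (by fun_prop)
    have hrat : Set.Ioo (0 : ℝ) 1 ∩ Set.range ((↑) : ℚ → ℝ) ⊆ (fun y : ℝ => 1 - y) ⁻¹' B := by
      rintro _ ⟨⟨h0, h1⟩, r, rfl⟩
      have hr0 : 0 < r := by exact_mod_cast h0
      have hr1 : r < 1 := by exact_mod_cast h1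
      have hnum : ((r.num.toNat : ℕ) : ℤ) = r.num :=
        Int.toNat_of_nonneg (Rat.num_pos.2 hr0).le
      have hlt : r.num.toNat < r.den := by
        have : r.num < r.den := by
          have := (Rat.lt_iff r 1).1 hr1
          simpa using this
        omega
      have hval : ((r.num.toNat : ℕ) : ℝ) / r.den = r := by
        have : ((r.num.toNat : ℕ) : ℝ) = (r.num : ℝ) := by
          exact_mod_cast congrArg (Int.cast (R := ℝ)) hnum
        rw [Rat.cast_def, this]
      have h := linked_rat hα _ _ hlt x ⟨hxpos, by linarith [hα.2]⟩
      rw [hval] at h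
      apply subset_closure
      rcases h with h | ⟨h, -⟩ | h
      · exact Or.inl ⟨_, hsub h, rfl⟩
      · linarith
      · right
        rw [← hxx'] at h
        exact hsub h
    intro y hy
    have hmem : (1 - y) ∈ closure (Set.Ioo (0 : ℝ) 1) := by
      rw [closure_Ioo zero_ne_one]
      exact ⟨by linarith [hy.2], by linarith [hy.1]⟩
    have hdense : Set.Ioo (0 : ℝ) 1 ⊆ (fun y : ℝ => 1 - y) ⁻¹' B :=
      (Rat.isDenseEmbedding_coe_real.dense.open_subset_closure_inter isOpen_Ioo).trans
        (closure_minimal hrat hclosed)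
    have := closure_minimal hdense hclosed hmem
    simpa using this
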